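/- Let R be a local ring with 1/2. The maximal cardinality of a set of pairwise commuting involutions in GL_n(R) (elements g ≠ E with g² = E, excluding the identity) is 2ⁿ - 1. -/

import Mathlib

/-- If `q` factors through `p` on `S`, then `q` takes at most as many values on `S` as `p`. -/
theorem aux_card_image {α β γ : Type*} [DecidableEq β] [DecidableEq γ] (S : Finset α)
    (p : α → β) (q : α → γ) (h : ∀ a ∈ S, ∀ b ∈ S, p a = p b → q a = q b) :
    (S.image q).card ≤ (S.image p).card := by
  have hc : ∀ y : S.image q, ∃ a ∈ S, q a = y := fun y => Finset.mem_image.1 y.2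
  choose f hf hq using hc
  have hinj : Function.Injective
      (fun y : S.image q => (⟨p (f y), Finset.mem_image_of_mem p (hf y)⟩ : S.image p)) := by
    intro y z hyz
    apply Subtype.ext
    rw [← hq y, ← hq z]
    exact h _ (hf y) _ (hf z) (congrArg Subtype.val hyz)
  simpa using Fintype.card_le_of_injective _ hinj

/-- Commuting involutions preserving a subspace `W` have at most `2 ^ dim W` restrictions. -/
theorem aux_div {D V : Type*} [DivisionRing D] [AddCommGroup V] [Module D V]
    [FiniteDimensional D V] (h2 : (2 : D) ≠ 0) [DecidableEq (Module.End D V)]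
    (S : Finset (Module.End D V)) (hS : ∀ g ∈ S, ∀ v, g (g v) = v)
    (hc : ∀ g ∈ S, ∀ h ∈ S, ∀ v, g (h v) = h (g v)) :
    ∀ (k : ℕ) (W : Submodule D V) [DecidableEq (W → V)], Module.finrank D W = k →
      (∀ g ∈ S, ∀ w ∈ W, g w ∈ W) →
      (S.image (fun g => fun w : W => g w)).card ≤ 2 ^ k := by
  classical
  intro k
  induction k using Nat.strong_induction_on with
  | _ k ih =>
  intro W _ hk hW
  by_cases hall : ∀ g ∈ S, (∀ w ∈ W, g w = w) ∨ (∀ w ∈ W, g w = - w)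
  · have hsub : S.image (fun g => fun w : W => g w) ⊆
        {(fun w : W => (w : V)), (fun w : W => -(w : V))} := by
      intro y hy
      obtain ⟨g, hg, rfl⟩ := Finset.mem_image.1 hy
      rcases hall g hg with h | h
      · simp [funext_iff]
        left; intro a ha; exact h a ha
      · simp [funext_iff]
        right; intro a ha; exact h a ha
    rcases Nat.eq_zero_or_pos k with h0 | h0
    · subst h0
      rw [Submodule.finrank_eq_zero] at hk
      subst hk
      simp only [pow_zero]
      rw [Finset.card_le_one]
      intro a ha b hb
      obtain ⟨g, hg, rfl⟩ := Finset.mem_image.1 ha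
      obtain ⟨g', hg', rfl⟩ := Finset.mem_image.1 hb
      funext w
      have : (w : V) = 0 := (Submodule.mem_bot D).1 w.2
      simp [this]
    · calc _ ≤ _ := Finset.card_le_card hsub
        _ ≤ 2 := Finset.card_le_two
        _ = 2 ^ 1 := rfl
        _ ≤ 2 ^ k := Nat.pow_le_pow_right (by norm_num) h0
  · push Not at hall
    obtain ⟨g, hg, ⟨w₁, hw₁, hne₁⟩, ⟨w₂, hw₂, hne₂⟩⟩ := hall
    let P : Submodule D V := W ⊓ LinearMap.ker (g - 1)
    let Q : Submodule D V := W ⊓ LinearMap.ker (g + 1)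
    have memP : ∀ v, v ∈ P ↔ v ∈ W ∧ g v = v := by
      intro v; simp [P, sub_eq_zero]
    have memQ : ∀ v, v ∈ Q ↔ v ∈ W ∧ g v = - v := by
      intro v; simp [Q, add_eq_zero_iff_eq_neg]
    have hPW : P < W := by
      refine lt_of_le_of_ne inf_le_left ?_
      intro h
      exact hne₁ ((memP w₁).1 (h ▸ hw₁)).2
    have hQW : Q < W := by
      refine lt_of_le_of_ne inf_le_left ?_
      intro h
      exact hne₂ ((memQ w₂).1 (h ▸ hw₂)).2
    have hdec : ∀ w ∈ W, ∃ p ∈ P, ∃ q ∈ Q, p + q = w := by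
      intro w hw
      refine ⟨(2 : D)⁻¹ • (w + g w), ?_, (2 : D)⁻¹ • (w - g w), ?_, ?_⟩
      · rw [memP]
        refine ⟨W.smul_mem _ (W.add_mem hw (hW g hg w hw)), ?_⟩
        rw [map_smul, map_add, hS g hg, add_comm]
      · rw [memQ]
        refine ⟨W.smul_mem _ (W.sub_mem hw (hW g hg w hw)), ?_⟩
        rw [map_smul, map_sub, hS g hg, ← smul_neg, neg_sub]
      · rw [← smul_add]
        have : w + g w + (w - g w) = (2 : D) • w := by rw [two_smul]; abel
        rw [this, smul_smul, inv_mul_cancel₀ h2, one_smul]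
    have hsup : P ⊔ Q = W := by
      apply le_antisymm (sup_le hPW.le hQW.le)
      intro w hw
      exact Submodule.mem_sup.2 (hdec w hw)
    have hinf : P ⊓ Q = ⊥ := by
      rw [eq_bot_iff]
      rintro v ⟨hp, hq⟩
      have h1 := ((memP v).1 hp).2
      have h3 := ((memQ v).1 hq).2
      rw [h1] at h3
      have : (2 : D) • v = 0 := by rw [two_smul]; nth_rewrite 1 [h3]; simp
      simpa [h2] using this
    have hdim : Module.finrank D P + Module.finrank D Q = k := by
      have := Submodule.finrank_sup_add_finrank_inf_eq P Q
      rw [hsup, hinf, hk] at this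
      simpa using this.symm
    have hPk : Module.finrank D P < k := hk ▸ Submodule.finrank_lt_finrank_of_lt hPW
    have hQk : Module.finrank D Q < k := hk ▸ Submodule.finrank_lt_finrank_of_lt hQW
    have iP := ih _ hPk P rfl (by
      intro f hf w hw
      rw [memP] at hw ⊢
      exact ⟨hW f hf w hw.1, by rw [hc g hg f hf, hw.2]⟩)
    have iQ := ih _ hQk Q rfl (by
      intro f hf w hw
      rw [memQ] at hw ⊢
      exact ⟨hW f hf w hw.1, by rw [hc g hg f hf, hw.2, map_neg]⟩)
    calc _ ≤ (S.image (fun f => ((fun w : P => f w), (fun w : Q => f w)))).card := by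
          apply aux_card_image
          intro a ha b hb hab
          funext w
          obtain ⟨p, hp, q, hq, hpq⟩ := hdec w w.2
          have e1 : a p = b p := congrFun (congrArg Prod.fst hab) ⟨p, hp⟩
          have e2 : a q = b q := congrFun (congrArg Prod.snd hab) ⟨q, hq⟩
          simp only [← hpq, map_add, e1, e2]
      _ ≤ ((S.image (fun f => fun w : P => f w)) ×ˢ
            (S.image (fun f => fun w : Q => f w))).card := by
          apply Finset.card_le_card
          intro y hy
          obtain ⟨f, hf, rfl⟩ := Finset.mem_image.1 hy
          exact Finset.mem_product.2 ⟨Finset.mem_image_of_mem (fun f => fun w : P => f w) hf,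
            Finset.mem_image_of_mem (fun f => fun w : Q => f w) hf⟩
      _ ≤ 2 ^ Module.finrank D P * 2 ^ Module.finrank D Q := by
          rw [Finset.card_product]
          exact Nat.mul_le_mul iP iQ
      _ = 2 ^ k := by rw [← pow_add, hdim]

/-- The bound for matrices over a division ring. -/
theorem aux_div_matrix {D : Type*} [DivisionRing D] (h2 : (2 : D) ≠ 0) (n : ℕ)
    (S : Finset (Matrix (Fin n) (Fin n) D)) (hS : ∀ g ∈ S, g * g = 1)
    (hc : ∀ g ∈ S, ∀ h ∈ S, g * h = h * g) : S.card ≤ 2 ^ n := by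
  classical
  let F : Matrix (Fin n) (Fin n) D → Module.End D (Fin n → D) :=
    fun M => Matrix.toLinearMapRight' M
  have hF : Function.Injective F := Matrix.toLinearMapRight'.injective
  have hmul : ∀ M N v, F N (F M v) = F (M * N) v := fun M N v =>
    (Matrix.toLinearMapRight'_mul_apply M N v).symm
  have key := aux_div h2 (S.image F) (by
      intro g hg v
      obtain ⟨M, hM, rfl⟩ := Finset.mem_image.1 hg
      rw [hmul, hS M hM]
      simp [F]) (by
      intro g hg h hh v
      obtain ⟨M, hM, rfl⟩ := Finset.mem_image.1 hg
      obtain ⟨N, hN, rfl⟩ := Finset.mem_image.1 hh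
      rw [hmul, hmul, hc M hM N hN]) n ⊤ (by simp) (by simp)
  rw [Finset.card_image_of_injective, Finset.card_image_of_injective _ hF] at key
  · exact key
  · intro a b hab
    refine LinearMap.ext fun v => ?_
    exact congrFun hab ⟨v, trivial⟩

theorem aux_local_comm {R : Type*} [Ring R] [IsLocalRing R] {a b : R} (h : a * b = 1) :
    b * a = 1 := by
  have hid : (b * a) * (b * a) = b * a := by
    rw [mul_assoc, ← mul_assoc a b a, h, one_mul]
  rcases IsLocalRing.isUnit_or_isUnit_of_add_one (add_sub_cancel (b * a) 1) with hu | hu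
  · exact hu.mul_left_cancel (by rw [hid, mul_one])
  · exfalso
    have h0 : b * a = 0 := hu.mul_left_cancel (by rw [sub_mul, one_mul, hid, sub_self, mul_zero])
    have : (1 : R) = 0 := by
      calc (1 : R) = (a * b) * (a * b) := by rw [h, one_mul]
        _ = a * (b * a) * b := by simp only [mul_assoc]
        _ = 0 := by rw [h0]; simp
    exact one_ne_zero this

theorem aux_local_unit {R : Type*} [Ring R] [IsLocalRing R] (a : R)
    (ha : a ∉ Ring.jacobson R) : IsUnit a := by
  rw [← Ideal.jacobson_bot, Ideal.mem_jacobson_iff] at ha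
  push Not at ha
  obtain ⟨y, hy⟩ := ha
  rcases IsLocalRing.isUnit_or_isUnit_of_add_one (show (y * a + 1) + (-(y * a)) = 1 by abel)
    with hu | hu
  · exfalso
    obtain ⟨z, hz⟩ := hu.exists_left_inv
    apply hy z
    rw [Ideal.mem_bot, sub_eq_zero, ← hz]
    noncomm_ring
  · obtain ⟨z, hz⟩ := hu.exists_left_inv
    have h1 : (-(z * y)) * a = 1 := by rw [← hz]; noncomm_ring
    exact ⟨⟨a, -(z * y), aux_local_comm h1, h1⟩, rfl⟩

theorem aux_upper {R : Type*} [Ring R] [IsLocalRing R] (h2 : IsUnit (2 : R)) (n : ℕ)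
    (S : Finset (Matrix (Fin n) (Fin n) R)) (hS : ∀ g ∈ S, g * g = 1)
    (hc : ∀ g ∈ S, ∀ h ∈ S, g * h = h * g) : S.card ≤ 2 ^ n := by
  classical
  let J := Ring.jacobson R
  have hJ : J ≠ ⊤ := (Ring.jacobson_lt_top R).ne
  haveI : Nontrivial (R ⧸ J) := Ideal.Quotient.nontrivial_iff.2 hJ
  letI : DivisionRing (R ⧸ J) := DivisionRing.ofIsUnitOrEqZero (by
    intro a
    obtain ⟨r, rfl⟩ := Ideal.Quotient.mk_surjective a
    by_cases hr : r ∈ J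
    · exact Or.inr (Ideal.Quotient.eq_zero_iff_mem.2 hr)
    · exact Or.inl ((aux_local_unit r hr).map _))
  let φ : Matrix (Fin n) (Fin n) R →+* Matrix (Fin n) (Fin n) (R ⧸ J) :=
    (Ideal.Quotient.mk J).mapMatrix
  have h2' : (2 : R ⧸ J) ≠ 0 := by
    have := (h2.map (Ideal.Quotient.mk J)).ne_zero
    rwa [map_ofNat] at this
  obtain ⟨c, hc2⟩ := h2.exists_left_inv
  let C : Matrix (Fin n) (Fin n) R := Matrix.diagonal fun _ => c
  have hC : C * 2 = 1 := by
    have : (2 : Matrix (Fin n) (Fin n) R) = Matrix.diagonal fun _ => 2 := rfl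
    rw [this, Matrix.diagonal_mul_diagonal, hc2, Matrix.diagonal_one]
  have hinj : Set.InjOn φ S := by
    intro g hg h hh hgh
    have hu : φ (g * h - 1) = 0 := by
      rw [map_sub, map_mul, hgh, ← map_mul, hS h hh, sub_self]
    set X := g * h - 1 with hX
    have hXJ : X ∈ (⊥ : Ideal (Matrix (Fin n) (Fin n) R)).jacobson := by
      rw [← Ideal.matrix_bot]
      apply Ideal.matrix_jacobson_le
      rw [Ideal.mem_matrix]
      intro i j
      rw [Ideal.jacobson_bot]
      exact Ideal.Quotient.eq_zero_iff_mem.1 (congrFun (congrFun hu i) j)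
    have hsq : X * X = - (2 * X) := by
      have h1 : g * h * (g * h) = 1 := by
        rw [mul_assoc, ← mul_assoc h g h, hc h hh g hg, mul_assoc g h h, hS h hh, mul_one,
          hS g hg]
      rw [hX, sub_mul, mul_sub, h1]
      noncomm_ring
    obtain ⟨z, hz⟩ := Ideal.mem_jacobson_iff.1 hXJ C
    rw [Ideal.mem_bot, sub_eq_zero] at hz
    have hX0 : X = 0 := by
      calc X = (z * C * X + z) * X := by rw [hz, one_mul]
        _ = z * C * (X * X) + z * X := by rw [add_mul, mul_assoc (z * C)]
        _ = - (z * (C * 2) * X) + z * X := by rw [hsq]; simp only [mul_neg, mul_assoc]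
        _ = 0 := by rw [hC]; simp
    have h1 : g * h = 1 := sub_eq_zero.1 hX0
    calc g = g * (h * h) := by rw [hS h hh, mul_one]
      _ = h := by rw [← mul_assoc, h1, one_mul]
  rw [← Finset.card_image_of_injOn hinj]
  apply aux_div_matrix h2'
  · intro g hg
    obtain ⟨M, hM, rfl⟩ := Finset.mem_image.1 hg
    rw [← map_mul, hS M hM, map_one]
  · intro g hg h hh
    obtain ⟨M, hM, rfl⟩ := Finset.mem_image.1 hg
    obtain ⟨N, hN, rfl⟩ := Finset.mem_image.1 hh
    rw [← map_mul, hc M hM N hN, map_mul]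

/-- Diagonal sign matrices. -/
def auxDiag (R : Type*) [Ring R] (n : ℕ) (e : Fin n → Bool) : (Matrix (Fin n) (Fin n) R)ˣ where
  val := Matrix.diagonal fun i => if e i then -1 else 1
  inv := Matrix.diagonal fun i => if e i then -1 else 1
  val_inv := by
    rw [Matrix.diagonal_mul_diagonal, ← Matrix.diagonal_one]
    congr 1; funext i; split_ifs <;> simp
  inv_val := by
    rw [Matrix.diagonal_mul_diagonal, ← Matrix.diagonal_one]
    congr 1; funext i; split_ifs <;> simp

theorem stmt_6 (R : Type*) [Ring R] [Nontrivial R] [IsLocalRing R] (h2 : IsUnit (2 : R))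
    (n : ℕ) :
    IsGreatest {k : ℕ | ∃ S : Finset ((Matrix (Fin n) (Fin n) R)ˣ),
        S.card = k ∧ (∀ g ∈ S, g ≠ 1 ∧ g ^ 2 = 1) ∧
        (∀ g ∈ S, ∀ h ∈ S, g * h = h * g)}
      (2 ^ n - 1) := by
  classical
  constructor
  · have hne : (-1 : R) ≠ 1 := by
      intro h
      apply h2.ne_zero
      rw [← one_add_one_eq_two]
      nth_rewrite 1 [← h]
      simp
    have hinj : Function.Injective (auxDiag R n) := by
      intro e f hef
      have h1 := Matrix.diagonal_injective (congrArg Units.val hef)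
      funext i
      have h3 := congrFun h1 i
      cases he : e i <;> cases hf : f i <;> simp [he, hf, hne, hne.symm] at h3 ⊢
    refine ⟨(Finset.univ.image (auxDiag R n)).erase 1, ?_, ?_, ?_⟩
    · rw [Finset.card_erase_of_mem, Finset.card_image_of_injective _ hinj]
      · simp
      · refine Finset.mem_image.2 ⟨fun _ => false, Finset.mem_univ _, ?_⟩
        apply Units.ext
        simp [auxDiag]
    · intro g hg
      obtain ⟨hg1, hg2⟩ := Finset.mem_erase.1 hg
      obtain ⟨e, -, rfl⟩ := Finset.mem_image.1 hg2
      refine ⟨hg1, ?_⟩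
      rw [sq]
      exact Units.ext (auxDiag R n e).val_inv
    · intro g hg h hh
      obtain ⟨e, -, rfl⟩ := Finset.mem_image.1 (Finset.mem_erase.1 hg).2
      obtain ⟨f, -, rfl⟩ := Finset.mem_image.1 (Finset.mem_erase.1 hh).2
      apply Units.ext
      simp only [auxDiag, Units.val_mul, Matrix.diagonal_mul_diagonal]
      congr 1; funext i; split_ifs <;> simp
  · rintro k ⟨S, rfl, hS, hc⟩
    have key := aux_upper h2 n ((insert 1 S).image Units.val) (by
      intro g hg
      obtain ⟨u, hu, rfl⟩ := Finset.mem_image.1 hg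
      rcases Finset.mem_insert.1 hu with rfl | hu
      · simp
      · have := congrArg Units.val (hS u hu).2
        rwa [sq] at this) (by
      intro g hg h hh
      obtain ⟨u, hu, rfl⟩ := Finset.mem_image.1 hg
      obtain ⟨v, hv, rfl⟩ := Finset.mem_image.1 hh
      rcases Finset.mem_insert.1 hu with rfl | hu
      · simp
      rcases Finset.mem_insert.1 hv with rfl | hv
      · simp
      exact congrArg Units.val (hc u hu v hv))
    rw [Finset.card_image_of_injective _ Units.val_injective,
      Finset.card_insert_of_notMem (fun h => (hS 1 h).1 rfl)] at key
    omega
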